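/- Let G = (V, E) be a finite simple graph with injective edge-weight function w, let F be a forest in G, and let P_1, …, P_T be a Borůvka partition sequence for F. Then the union, over all phases i ∈ {1, …, T} and all classes C of P_i, of the sets L_C equals exactly the set of F-light edges of G. -/

import Mathlib

/-- An edge `e` (as an element of `Sym2 V`) has exactly one endpoint in `C`. -/
def CrossesCut {V : Type} (C : Set V) (e : Sym2 V) : Prop :=
  ∃ a b : V, e = s(a, b) ∧ a ∈ C ∧ b ∉ C

/-- `u` and `v` are `F`-light with respect to the weight function `w`:
either `u` and `v` lie in different components of the forest `F`, or the (unique)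
path between them in `F` contains an edge of weight at least `w s(u,v)`. -/
def FLightPair {V : Type} (F : SimpleGraph V) (w : Sym2 V → ℝ) (u v : V) : Prop :=
  ∀ p : F.Path u v, ∃ e ∈ (p : F.Walk u v).edges, w s(u, v) ≤ w e

/-- An edge of `G` is `F`-light. -/
def FLight {V : Type} (F : SimpleGraph V) (w : Sym2 V → ℝ) (e : Sym2 V) : Prop :=
  ∀ u v : V, e = s(u, v) → FLightPair F w u v

/-- `e` is the minimum-weight edge of `F` having exactly one endpoint in `C`
(the minimum weight outgoing edge, MWOE, of `C`). -/
def IsMWOE {V : Type} (F : SimpleGraph V) (w : Sym2 V → ℝ) (C : Set V) (e : Sym2 V) : Prop :=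
  e ∈ F.edgeSet ∧ CrossesCut C e ∧ ∀ f ∈ F.edgeSet, CrossesCut C f → w e ≤ w f

/-- Adjacency of two distinct classes `C`, `C'` of the partition `Pi` in the auxiliary
graph: one of them has an MWOE (recorded by `eC`) whose other endpoint lies in the other
class. -/
def AuxAdj {V : Type} (F : SimpleGraph V) (w : Sym2 V → ℝ) (Pi : Set (Set V))
    (eC : Set V → Sym2 V) (C C' : Set V) : Prop :=
  C ∈ Pi ∧ C' ∈ Pi ∧ C ≠ C' ∧
    (((∃ f, IsMWOE F w C f) ∧ ∃ x ∈ C', x ∈ eC C) ∨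
     ((∃ f, IsMWOE F w C' f) ∧ ∃ x ∈ C, x ∈ eC C'))

/-- `P 0, P 1, …, P (T-1)` is a Borůvka partition sequence for the forest `F`, with
`eC C` recording the MWOE of each class `C` that has one:
`P 0` is the partition into singletons; each `P i` is a partition of `V`; classes of
`P (i+1)` are unions of the classes of `P i` lying in the same connected component of
the auxiliary graph; and the classes of `P (T-1)` are exactly the vertex sets of the
connected components of `F`. -/
def IsBoruvkaSeq {V : Type} (F : SimpleGraph V) (w : Sym2 V → ℝ) (T : ℕ)
    (P : ℕ → Set (Set V)) (eC : Set V → Sym2 V) : Prop :=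
  1 ≤ T ∧
  (∀ i < T, Setoid.IsPartition (P i)) ∧
  (P 0 = Set.range (fun v : V => ({v} : Set V))) ∧
  (∀ C : Set V, (∃ f, IsMWOE F w C f) → IsMWOE F w C (eC C)) ∧
  (∀ i, i + 1 < T →
    P (i + 1) = { D | ∃ C ∈ P i,
      D = ⋃₀ { C' | C' ∈ P i ∧ Relation.ReflTransGen (AuxAdj F w (P i) eC) C C' } }) ∧
  (P (T - 1) = { D | ∃ v : V, D = { u | F.Reachable u v } })

/-- The set `L_C` of candidate edges of `G` for a class `C`: edges with exactly one
endpoint in `C`, of weight at most the weight of the MWOE of `C` if `C` has one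
(and with no weight restriction if `C` has no MWOE). -/
def LSet {V : Type} (G F : SimpleGraph V) (w : Sym2 V → ℝ) (eC : Set V → Sym2 V)
    (C : Set V) : Set (Sym2 V) :=
  { e | e ∈ G.edgeSet ∧ CrossesCut C e ∧ ((∃ f, IsMWOE F w C f) → w e ≤ w (eC C)) }

/-- A walk that starts inside `C` and ends outside of it uses an edge crossing `C`. -/
theorem SimpleGraph.Walk.exists_mem_edges_crossesCut {V : Type} {F : SimpleGraph V} {C : Set V}
    {u v : V} (p : F.Walk u v) (hu : u ∈ C) (hv : v ∉ C) : ∃ f ∈ p.edges, CrossesCut C f := by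
  induction p with
  | nil => exact absurd hu hv
  | @cons a b c h q ih =>
    by_cases hb : b ∈ C
    · obtain ⟨f, hf, hc⟩ := ih hb hv
      exact ⟨f, by simp [hf], hc⟩
    · exact ⟨s(a, b), by simp, a, b, rfl, hu, hb⟩

theorem CrossesCut.mem_or_mem {V : Type} {C : Set V} {x y : V} (h : CrossesCut C s(x, y)) :
    (x ∈ C ∧ y ∉ C) ∨ (y ∈ C ∧ x ∉ C) := by
  obtain ⟨a, b, hab, ha, hb⟩ := h
  rcases Sym2.eq_iff.1 hab with ⟨rfl, rfl⟩ | ⟨rfl, rfl⟩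
  · exact Or.inl ⟨ha, hb⟩
  · exact Or.inr ⟨ha, hb⟩

theorem crossesCut_of_mem_of_notMem {V : Type} {C : Set V} {x y : V} (hx : x ∈ C) (hy : y ∉ C) :
    CrossesCut C s(x, y) :=
  ⟨x, y, rfl, hx, hy⟩

/-- A trail splits at any of its edges `f` into two walks avoiding `f`. -/
theorem SimpleGraph.Walk.IsTrail.exists_split {V : Type} {F : SimpleGraph V} {u v : V}
    {p : F.Walk u v} (hp : p.IsTrail) {f : Sym2 V} (hf : f ∈ p.edges) :
    ∃ x y, f = s(x, y) ∧ (∃ q : F.Walk u x, ∀ e ∈ q.edges, e ∈ p.edges ∧ e ≠ f) ∧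
      ∃ r : F.Walk y v, ∀ e ∈ r.edges, e ∈ p.edges ∧ e ≠ f := by
  induction p with
  | nil => simp at hf
  | @cons a b c h t ih =>
    rw [SimpleGraph.Walk.isTrail_cons] at hp
    by_cases hfe : f = s(a, b)
    · refine ⟨a, b, hfe, ⟨.nil, by simp⟩, t, fun e he => ⟨by simp [he], ?_⟩⟩
      rintro rfl
      exact hp.2 (hfe ▸ he)
    · have hft : f ∈ t.edges := by simpa [hfe] using hf
      obtain ⟨x, y, hxy, ⟨q, hq⟩, r, hr⟩ := ih hp.1 hft
      refine ⟨x, y, hxy, ⟨.cons h q, fun e he => ?_⟩, r, fun e he => ?_⟩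
      · rw [SimpleGraph.Walk.edges_cons, List.mem_cons] at he
        rcases he with rfl | he
        · exact ⟨by simp, fun h' => hfe h'.symm⟩
        · exact ⟨by simp [(hq e he).1], (hq e he).2⟩
      · exact ⟨by simp [(hr e he).1], (hr e he).2⟩

/-- A walk all of whose edges are lighter than the MWOE of `C` does not leave `C`. -/
theorem IsMWOE.mem_of_walk {V : Type} {F : SimpleGraph V} {w : Sym2 V → ℝ} {C : Set V}
    {f : Sym2 V} (hf : IsMWOE F w C f) {x u : V} (q : F.Walk x u)
    (hq : ∀ e ∈ q.edges, w e < w f) (hx : x ∈ C) : u ∈ C := by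
  by_contra hu
  obtain ⟨e, he, hc⟩ := q.exists_mem_edges_crossesCut hx hu
  exact (hq e he).not_ge (hf.2.2 e (q.edges_subset_edgeSet he) hc)

/-- On a finite vertex set, a class crossed by some edge of `F` has an MWOE. -/
theorem exists_isMWOE {V : Type} [Fintype V] {F : SimpleGraph V} (w : Sym2 V → ℝ) {C : Set V}
    {f : Sym2 V} (hf : f ∈ F.edgeSet) (hc : CrossesCut C f) : ∃ g, IsMWOE F w C g := by
  obtain ⟨g, hg, hmin⟩ := Set.exists_min_image {g | g ∈ F.edgeSet ∧ CrossesCut C g} w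
    (Set.toFinite _) ⟨f, hf, hc⟩
  exact ⟨g, hg.1, hg.2, fun h hh hhc => hmin h ⟨hh, hhc⟩⟩

/-- If `f` is the only edge of `F` crossing `S`, then a step of the auxiliary graph from a class
inside `S` to a class outside `S` selects `f` as the MWOE of one of the two classes. -/
theorem AuxAdj.isMWOE_of_subset_compl {V : Type} {F : SimpleGraph V} {w : Sym2 V → ℝ}
    {Pi : Set (Set V)} {eC : Set V → Sym2 V}
    (heC : ∀ C : Set V, (∃ f, IsMWOE F w C f) → IsMWOE F w C (eC C))
    {S : Set V} {f : Sym2 V} (hS : ∀ g ∈ F.edgeSet, CrossesCut S g → g = f)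
    {D D' : Set V} (h : AuxAdj F w Pi eC D D') (hD : D ⊆ S) (hD' : D' ⊆ Sᶜ) :
    IsMWOE F w D f ∨ IsMWOE F w D' f := by
  obtain ⟨-, -, -, ⟨hex, x, hx, hxe⟩ | ⟨hex, x, hx, hxe⟩⟩ := h
  · have hm := heC D hex
    obtain ⟨a, b, hab, ha, -⟩ := hm.2.1
    rw [hab, Sym2.mem_iff] at hxe
    rcases hxe with rfl | rfl
    · exact absurd (hD ha) (hD' hx)
    · exact Or.inl (hS _ hm.1 ⟨a, x, hab, hD ha, hD' hx⟩ ▸ hm)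
  · have hm := heC D' hex
    obtain ⟨a, b, hab, ha, -⟩ := hm.2.1
    rw [hab, Sym2.mem_iff] at hxe
    rcases hxe with rfl | rfl
    · exact absurd (hD hx) (hD' ha)
    · exact Or.inr (hS _ hm.1 ⟨x, a, hab.trans Sym2.eq_swap, hD hx, hD' ha⟩ ▸ hm)

theorem AuxAdj.symm {V : Type} {F : SimpleGraph V} {w : Sym2 V → ℝ} {Pi : Set (Set V)}
    {eC : Set V → Sym2 V} {C C' : Set V} (h : AuxAdj F w Pi eC C C') : AuxAdj F w Pi eC C' C :=
  ⟨h.2.1, h.1, h.2.2.1.symm, h.2.2.2.symm⟩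

/-- If `f = s(x, y)` is the only edge of `F` crossing `S`, then `f` is selected in some phase as the
MWOE of a class that lies on one side of `S`. -/
theorem IsBoruvkaSeq.exists_isMWOE_subset {V : Type} {F : SimpleGraph V} {w : Sym2 V → ℝ} {T : ℕ}
    {P : ℕ → Set (Set V)} {eC : Set V → Sym2 V} (hB : IsBoruvkaSeq F w T P eC) {S : Set V}
    {x y : V} (hS : ∀ g ∈ F.edgeSet, CrossesCut S g → g = s(x, y)) (hxy : F.Adj x y)
    (hx : x ∈ S) (hy : y ∉ S) :
    ∃ i < T, ∃ D ∈ P i, IsMWOE F w D s(x, y) ∧ (D ⊆ S ∨ D ⊆ Sᶜ) := by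
  obtain ⟨hT, -, hP0, heC, hstep, hlast⟩ := hB
  by_contra! hno
  have hside : ∀ i < T, ∀ C ∈ P i, C ⊆ S ∨ C ⊆ Sᶜ := by
    intro i
    induction i with
    | zero =>
      rintro - C hC
      rw [hP0] at hC
      obtain ⟨v, rfl⟩ := hC
      simpa using em (v ∈ S)
    | succ i ih =>
      intro hi D hD
      have hi' : i < T := by omega
      have hadj : ∀ D D', AuxAdj F w (P i) eC D D' → D ⊆ S → ¬ D' ⊆ Sᶜ := by
        intro D D' h hDS hDS'
        rcases h.isMWOE_of_subset_compl heC hS hDS hDS' with hm | hm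
        · exact (hno i hi' D h.1 hm).1 hDS
        · exact (hno i hi' D' h.2.1 hm).2 hDS'
      rw [hstep i hi] at hD
      obtain ⟨C, hC, rfl⟩ := hD
      rcases ih hi' C hC with hCS | hCS
      · left
        refine Set.sUnion_subset ?_
        rintro C' ⟨-, hCC'⟩
        induction hCC' with
        | refl => exact hCS
        | tail _ hbc hb => exact (ih hi' _ hbc.2.1).resolve_right (hadj _ _ hbc hb)
      · right
        refine Set.sUnion_subset ?_
        rintro C' ⟨-, hCC'⟩
        induction hCC' with
        | refl => exact hCS
        | tail _ hbc hb =>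
          exact (ih hi' _ hbc.2.1).resolve_left fun h => hadj _ _ hbc.symm h hb
  have hmem : {u | F.Reachable u x} ∈ P (T - 1) := by
    rw [hlast]
    exact ⟨x, rfl⟩
  rcases hside (T - 1) (by omega) _ hmem with h | h
  · exact hy (h hxy.symm.reachable)
  · exact h (SimpleGraph.Reachable.refl x) hx

theorem fLight_of_mem_LSet {V : Type} [Fintype V] {G F : SimpleGraph V} {w : Sym2 V → ℝ}
    {eC : Set V → Sym2 V} (heC : ∀ C : Set V, (∃ f, IsMWOE F w C f) → IsMWOE F w C (eC C))
    {C : Set V} {e : Sym2 V} (he : e ∈ LSet G F w eC C) : FLight F w e := by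
  obtain ⟨-, hc, hle⟩ := he
  rintro u v rfl ⟨p, -⟩
  obtain ⟨f, hf, hfc⟩ : ∃ f ∈ p.edges, CrossesCut C f := by
    rcases hc.mem_or_mem with ⟨hu, hv⟩ | ⟨hv, hu⟩
    · exact p.exists_mem_edges_crossesCut hu hv
    · obtain ⟨f, hf, hfc⟩ := p.reverse.exists_mem_edges_crossesCut hv hu
      exact ⟨f, by simpa using hf, hfc⟩
  have hfF := p.edges_subset_edgeSet hf
  have hex := exists_isMWOE w hfF hfc
  exact ⟨f, hf, (hle hex).trans ((heC C hex).2.2 f hfF hfc)⟩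

/-- An edge joining two different components of `F` lies in `L_C` for a class of the last phase. -/
theorem IsBoruvkaSeq.exists_mem_LSet_of_not_reachable {V : Type} {G F : SimpleGraph V}
    {w : Sym2 V → ℝ} {T : ℕ} {P : ℕ → Set (Set V)} {eC : Set V → Sym2 V}
    (hB : IsBoruvkaSeq F w T P eC) {u v : V} (he : s(u, v) ∈ G.edgeSet)
    (huv : ¬ F.Reachable u v) : ∃ i < T, ∃ C ∈ P i, s(u, v) ∈ LSet G F w eC C := by
  obtain ⟨hT, -, -, -, -, hlast⟩ := hB
  refine ⟨T - 1, by omega, {z | F.Reachable z u}, by rw [hlast]; exact ⟨u, rfl⟩, he,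
    crossesCut_of_mem_of_notMem (SimpleGraph.Reachable.refl u) fun h => huv h.symm, ?_⟩
  rintro ⟨f, hf, ⟨a, b, rfl, ha, hb⟩, -⟩
  exact absurd ((SimpleGraph.Adj.reachable (SimpleGraph.Adj.symm hf)).trans ha) hb

/-- An `F`-light edge inside a component of `F` lies in `L_C` for a class `C` whose MWOE is the
heaviest edge of the path of `F` joining its endpoints. -/
theorem IsBoruvkaSeq.exists_mem_LSet_of_reachable {V : Type} {G F : SimpleGraph V}
    {w : Sym2 V → ℝ} (hw : Set.InjOn w G.edgeSet) (hFG : F ≤ G) (hFacyclic : F.IsAcyclic)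
    {T : ℕ} {P : ℕ → Set (Set V)} {eC : Set V → Sym2 V}
    (hB : IsBoruvkaSeq F w T P eC) {u v : V} (he : s(u, v) ∈ G.edgeSet)
    (hlight : FLightPair F w u v) (huv : F.Reachable u v) :
    ∃ i < T, ∃ C ∈ P i, s(u, v) ∈ LSet G F w eC C := by
  classical
  obtain ⟨p, hp⟩ := huv.exists_isPath
  obtain ⟨e', he', hle'⟩ := hlight ⟨p, hp⟩
  obtain ⟨f, hf, hmax⟩ := p.edges.toFinset.exists_max_image w ⟨e', by simpa using he'⟩
  simp only [List.mem_toFinset] at hf hmax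
  have hlt : ∀ g ∈ p.edges, g ≠ f → w g < w f := fun g hg hgf =>
    (hmax g hg).lt_of_ne fun h => hgf (hw
      (SimpleGraph.edgeSet_mono hFG (p.edges_subset_edgeSet hg))
      (SimpleGraph.edgeSet_mono hFG (p.edges_subset_edgeSet hf)) h)
  have hef : w s(u, v) ≤ w f := hle'.trans (hmax e' he')
  have hfF := p.edges_subset_edgeSet hf
  obtain ⟨x, y, rfl, ⟨q, hq⟩, r, hr⟩ := hp.isTrail.exists_split hf
  have hbridge : ¬ (F.deleteEdges {s(x, y)}).Reachable x y :=
    SimpleGraph.isBridge_iff.1 (SimpleGraph.isAcyclic_iff_forall_isBridge.1 hFacyclic hfF)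
  have hxu : (F.deleteEdges {s(x, y)}).Reachable x u :=
    (q.toDeleteEdges {s(x, y)} fun g hg => (hq g hg).2).reachable.symm
  have hyv : (F.deleteEdges {s(x, y)}).Reachable y v :=
    (r.toDeleteEdges {s(x, y)} fun g hg => (hr g hg).2).reachable
  have hS : ∀ g ∈ F.edgeSet,
      CrossesCut {z | (F.deleteEdges {s(x, y)}).Reachable x z} g → g = s(x, y) := by
    rintro _ hg ⟨a, b, rfl, ha, hb⟩
    by_contra hne
    exact hb (SimpleGraph.Reachable.trans ha (SimpleGraph.Adj.reachable
      (SimpleGraph.deleteEdges_adj.2 ⟨hg, hne⟩)))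
  obtain ⟨i, hi, D, hD, hm, hside⟩ := hB.exists_isMWOE_subset hS hfF
    (SimpleGraph.Reachable.refl x) hbridge
  refine ⟨i, hi, D, hD, he, ?_, fun hex => ?_⟩
  · rcases hm.2.1.mem_or_mem with ⟨hx, -⟩ | ⟨hy, -⟩
    · have hDS := hside.resolve_right fun h => h hx (SimpleGraph.Reachable.refl x)
      have hu : u ∈ D := hm.mem_of_walk q.reverse (fun g hg => by
        have := hq g (by simpa using hg)
        exact hlt g this.1 this.2) hx
      exact crossesCut_of_mem_of_notMem hu fun hv =>
        hbridge (SimpleGraph.Reachable.trans (hDS hv) hyv.symm)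
    · have hDS := hside.resolve_left fun h => hbridge (h hy)
      have hv : v ∈ D := hm.mem_of_walk r (fun g hg => hlt g (hr g hg).1 (hr g hg).2) hy
      rw [Sym2.eq_swap]
      exact crossesCut_of_mem_of_notMem hv fun hu => hDS hu hxu
  · have hmC := hB.2.2.2.1 D hex
    exact hef.trans (hm.2.2 _ hmC.1 hmC.2.1)

/-- The union of the sets `L_C` over all phases `i` and all classes `C` of `P i` of a
Borůvka partition sequence for a forest `F` in `G` is exactly the set of `F`-light
edges of `G`. -/
theorem stmt_1 {V : Type} [Fintype V] [DecidableEq V]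
    (G F : SimpleGraph V) (w : Sym2 V → ℝ)
    (hw : Set.InjOn w G.edgeSet)
    (hFG : F ≤ G) (hFacyclic : F.IsAcyclic)
    (T : ℕ) (P : ℕ → Set (Set V)) (eC : Set V → Sym2 V)
    (hB : IsBoruvkaSeq F w T P eC) :
    (⋃ i ∈ Finset.range T, ⋃ C ∈ P i, LSet G F w eC C)
      = { e | e ∈ G.edgeSet ∧ FLight F w e } := by
  ext e
  simp only [Set.mem_iUnion, Finset.mem_range, exists_prop, Set.mem_ofPred_eq]
  constructor
  · rintro ⟨i, -, C, -, he⟩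
    exact ⟨he.1, fLight_of_mem_LSet hB.2.2.2.1 he⟩
  · rintro ⟨he, hlight⟩
    induction e using Sym2.ind with
    | _ u v =>
      by_cases huv : F.Reachable u v
      · exact hB.exists_mem_LSet_of_reachable hw hFG hFacyclic he (hlight u v rfl) huv
      · exact hB.exists_mem_LSet_of_not_reachable he huv
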